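/- Let p be a floppy graph metric with vertex set V and edge set E such that the set [V]² \ E is at most countable. Then for any indexed family (F_e)_{e ∈ [V]² \ E} of dense subsets of the half-line (0,∞), there exists an injective function r ∈ Π_{e ∈ [V]² \ E} F_e such that p ∪ r is a full metric on V. -/

import Mathlib

open scoped Classical

universe u

namespace GraphMetricPaper

variable {X : Type u}

/-- The vertex set `V = ⋃ E` of a graph given by an adjacency relation `E`. -/
def Vtx (E : X → X → Prop) : Set X := {x | ∃ y, E x y}

/-- Two points are joined by a walk in the graph `E`. -/
def Joined (E : X → X → Prop) (x y : X) : Prop :=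
  ∃ (n : ℕ) (c : ℕ → X), c 0 = x ∧ c n = y ∧ ∀ i, i < n → E (c i) (c (i + 1))

/-- The set of weights of walks from `x` to `y`. -/
def walkSums (E : X → X → Prop) (d : X → X → ℝ) (x y : X) : Set ℝ :=
  {s | ∃ (n : ℕ) (c : ℕ → X), c 0 = x ∧ c n = y ∧ (∀ i, i < n → E (c i) (c (i + 1))) ∧
    s = ∑ i ∈ Finset.range n, d (c i) (c (i + 1))}

/-- The shortest-path pseudometric `d̂` determined by a weight function `d` on a graph `E`. -/
noncomputable def hatd (E : X → X → Prop) (d : X → X → ℝ) (x y : X) : ℝ :=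
  sInf (walkSums E d x y)

/-- The function `ď` bounding the possible extensions of `d` from below:
`ď(x,y) = sup_{ab ∈ E} max {0, d(ab) - d̂(a,x) - d̂(y,b)}`. -/
noncomputable def checkd (E : X → X → Prop) (d : X → X → ℝ) (x y : X) : ℝ :=
  sSup ({0} ∪ {r | ∃ a b, E a b ∧ r = d a b - hatd E d a x - hatd E d y b})

/-- The pseudometric `d̈` on doubletons:
`d̈(xy,uv) = min {d̂(x,u) + d̂(y,v), d̂(x,v) + d̂(y,u)}`. -/
noncomputable def ddot (E : X → X → Prop) (d : X → X → ℝ) (x y u v : X) : ℝ :=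
  min (hatd E d x u + hatd E d y v) (hatd E d x v + hatd E d y u)

/-- `d` is a graph pseudometric with edge relation `E`:  `E` is a (symmetric, irreflexive)
connected graph, `d` is a nonnegative symmetric weight on the edges, and `d = d̂` on edges. -/
structure IsGraphPseudometric (E : X → X → Prop) (d : X → X → ℝ) : Prop where
  symm : ∀ ⦃a b⦄, E a b → E b a
  irrefl : ∀ a, ¬ E a a
  wt_symm : ∀ ⦃a b⦄, E a b → d a b = d b a
  nonneg : ∀ ⦃a b⦄, E a b → 0 ≤ d a b
  connected : ∀ x ∈ Vtx E, ∀ y ∈ Vtx E, Joined E x y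
  edge_eq : ∀ ⦃a b⦄, E a b → d a b = hatd E d a b

/-- A graph metric is a graph pseudometric with strictly positive weights. -/
def IsGraphMetric (E : X → X → Prop) (d : X → X → ℝ) : Prop :=
  IsGraphPseudometric E d ∧ ∀ ⦃a b⦄, E a b → 0 < d a b

/-- A floppy graph pseudometric: `ď(x,y) < d̂(x,y)` for every `xy ∈ [V]² \ E`. -/
def FloppyPseudometric (E : X → X → Prop) (d : X → X → ℝ) : Prop :=
  IsGraphPseudometric E d ∧
    ∀ x ∈ Vtx E, ∀ y ∈ Vtx E, x ≠ y → ¬ E x y → checkd E d x y < hatd E d x y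

/-- A floppy graph metric: `ď(x,y) < d̂(x,y)` for every `xy ∈ [V]² \ E`. -/
def FloppyMetric (E : X → X → Prop) (d : X → X → ℝ) : Prop :=
  IsGraphMetric E d ∧
    ∀ x ∈ Vtx E, ∀ y ∈ Vtx E, x ≠ y → ¬ E x y → checkd E d x y < hatd E d x y

/-- The edge relation of the one-step extension `E ∪ {xy}`. -/
def extEdge (E : X → X → Prop) (x y : X) : X → X → Prop :=
  fun a b => E a b ∨ (a = x ∧ b = y) ∨ (a = y ∧ b = x)

/-- The weight function of the one-step extension `d ∪ {⟨xy, r⟩}`. -/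
noncomputable def extWt (d : X → X → ℝ) (x y : X) (r : ℝ) : X → X → ℝ :=
  fun a b => if (a = x ∧ b = y) ∨ (a = y ∧ b = x) then r else d a b

/-- The set `[V]² \ E` of unordered pairs of distinct vertices that are not edges. -/
def nonEdgePairs (E : X → X → Prop) : Set (Sym2 X) :=
  {e | ∃ a b : X, e = s(a, b) ∧ a ≠ b ∧ a ∈ Vtx E ∧ b ∈ Vtx E ∧ ¬ E a b}

/-- A set of (unordered) weighted pairs, presented as a relation `R`, is a full metric
on `V`: it is symmetric, its domain is exactly `[V]²`, it is single-valued, positive,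
and satisfies the triangle inequality. -/
def IsFullMetricRel (V : Set X) (R : X → X → ℝ → Prop) : Prop :=
  (∀ a b r, R a b r → R b a r) ∧
  (∀ a b r, R a b r → a ∈ V ∧ b ∈ V ∧ a ≠ b) ∧
  (∀ a b, a ∈ V → b ∈ V → a ≠ b → ∃ r, R a b r) ∧
  (∀ a b r s, R a b r → R a b s → r = s) ∧
  (∀ a b r, R a b r → 0 < r) ∧
  (∀ a b c r s t, R a b r → R b c s → R a c t → t ≤ r + s)

/-- A weight function `D` on `[V]²` is a full metric on `V`. -/
def IsFullMetricOn (V : Set X) (D : X → X → ℝ) : Prop :=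
  (∀ a b, a ∈ V → b ∈ V → a ≠ b → D a b = D b a) ∧
  (∀ a b, a ∈ V → b ∈ V → a ≠ b → 0 < D a b) ∧
  (∀ a b c, a ∈ V → b ∈ V → c ∈ V → a ≠ b → b ≠ c → a ≠ c → D a c ≤ D a b + D b c)

/-- Player I has a winning strategy in the metric-extending game `Game_d(lam, Fam)`:
there are functions `S1, S2` choosing, for each inning `β < lam` and each sequence of
previous answers of player II, a legal doubleton in `[V]²` and a set from `Fam`, such that
for every play of player II respecting the strategy, the resulting relation
`d ∪ {⟨x_α y_α, r_α⟩ : α < lam}` is a full metric on `V`. -/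
def WinningStratI (V : Set X) (E : X → X → Prop) (d : X → X → ℝ)
    (lam : Ordinal.{u}) (Fam : Set (Set ℝ)) : Prop :=
  ∃ (S1 : ∀ β : Ordinal.{u}, β < lam → (∀ α : Ordinal.{u}, α < β → ℝ) → X × X)
    (S2 : ∀ β : Ordinal.{u}, β < lam → (∀ α : Ordinal.{u}, α < β → ℝ) → Set ℝ),
    (∀ β hβ s, S2 β hβ s ∈ Fam) ∧
    (∀ β hβ s, (S1 β hβ s).1 ∈ V ∧ (S1 β hβ s).2 ∈ V ∧ (S1 β hβ s).1 ≠ (S1 β hβ s).2) ∧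
    (∀ s : ∀ α : Ordinal.{u}, α < lam → ℝ,
      (∀ α (hα : α < lam), s α hα ∈ S2 α hα (fun γ hγ => s γ (hγ.trans hα))) →
      IsFullMetricRel V (fun a b r =>
        (E a b ∧ r = d a b) ∨
        ∃ α, ∃ hα : α < lam,
          ((a = (S1 α hα (fun γ hγ => s γ (hγ.trans hα))).1 ∧
            b = (S1 α hα (fun γ hγ => s γ (hγ.trans hα))).2) ∨
           (a = (S1 α hα (fun γ hγ => s γ (hγ.trans hα))).2 ∧
            b = (S1 α hα (fun γ hγ => s γ (hγ.trans hα))).1)) ∧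
          r = s α hα))

/-- Player II has a winning strategy in the metric-extending game `Game_d(lam, Fam)`:
there is a function `T` assigning to each inning `β < lam` and each sequence of moves of
player I (of length `β + 1`) an answer in the set component of the last move, such that
for every legal play of player I, the resulting relation is not a full metric on `V`. -/
def WinningStratII (V : Set X) (E : X → X → Prop) (d : X → X → ℝ)
    (lam : Ordinal.{u}) (Fam : Set (Set ℝ)) : Prop :=
  ∃ T : ∀ β : Ordinal.{u}, β < lam → (∀ α : Ordinal.{u}, α ≤ β → (X × X) × Set ℝ) → ℝ,
    (∀ β hβ p, (p β le_rfl).2 ∈ Fam → T β hβ p ∈ (p β le_rfl).2) ∧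
    (∀ p : ∀ α : Ordinal.{u}, α < lam → (X × X) × Set ℝ,
      (∀ α hα, (p α hα).1.1 ∈ V ∧ (p α hα).1.2 ∈ V ∧ (p α hα).1.1 ≠ (p α hα).1.2 ∧
        (p α hα).2 ∈ Fam) →
      ¬ IsFullMetricRel V (fun a b r =>
        (E a b ∧ r = d a b) ∨
        ∃ α, ∃ hα : α < lam,
          ((a = (p α hα).1.1 ∧ b = (p α hα).1.2) ∨
           (a = (p α hα).1.2 ∧ b = (p α hα).1.1)) ∧
          r = T α hα (fun γ hγ => p γ (lt_of_le_of_lt hγ hα))))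

/-- The edge relation of the glued graph `E_d = E_p ∪ ⋃_{f ∈ F} E_f`. -/
def gluedEdge (Ep : X → X → Prop) (F : Set ((X → X → Prop) × (X → X → ℝ))) :
    X → X → Prop :=
  fun a b => Ep a b ∨ ∃ f ∈ F, f.1 a b

/-- `Λ(v; B) = inf {d̂(a,v) + d̂(v,b) - d̂(a,b) : a, b ∈ B}`. -/
noncomputable def Lam (E : X → X → Prop) (d : X → X → ℝ) (v : X) (B : Set X) : ℝ :=
  sInf {r | ∃ a ∈ B, ∃ b ∈ B, r = hatd E d a v + hatd E d v b - hatd E d a b}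

/-- The gluing setup: a graph pseudometric `p = (Ep, wp)` and a family `F` of graph
pseudometrics such that each member meets `V_p`, agrees with `p̂` on the intersection of
the vertex sets, and distinct members only meet inside `V_p`; `wd` is the glued weight
function `d = p ∪ ⋃ F` on `E_d = E_p ∪ ⋃_{f ∈ F} E_f`. -/
structure GluingSetup (Ep : X → X → Prop) (wp : X → X → ℝ)
    (F : Set ((X → X → Prop) × (X → X → ℝ))) (wd : X → X → ℝ) : Prop where
  hp : IsGraphPseudometric Ep wp
  hF : ∀ f ∈ F, IsGraphPseudometric f.1 f.2
  meet : ∀ f ∈ F, (Vtx f.1 ∩ Vtx Ep).Nonempty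
  agree : ∀ f ∈ F, ∀ x ∈ Vtx f.1 ∩ Vtx Ep, ∀ y ∈ Vtx f.1 ∩ Vtx Ep, x ≠ y →
    hatd f.1 f.2 x y = hatd Ep wp x y
  inter_sub : ∀ f ∈ F, ∀ g ∈ F, f ≠ g → Vtx f.1 ∩ Vtx g.1 ⊆ Vtx Ep
  wd_p : ∀ ⦃a b⦄, Ep a b → wd a b = wp a b
  wd_F : ∀ f ∈ F, ∀ ⦃a b⦄, f.1 a b → wd a b = f.2 a b


/-!
Since `ď < d̂` off the edges, the path metric of a floppy graph has the following property: every
non-edge `xy` can be given a strictly smaller length `t` without shortening any edge. Choose a value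
`r` strictly between `t` and the distance of `x` and `y`, and let `S` be the largest metric below
the given one with `S x y = r`. In the metric `S` the length `t` is still harmless for the old
edges, so a path joining the ends of an old edge through `xy` has slack at least `r - t`; and as
distinct points have positive distance, a detour from `x` to `y` through any other pair is strictly
longer than `r`. Hence every remaining non-edge can still be shortened when `xy` is added to the
edges, and the property survives. It can therefore be used to fix the non-edges one at a time, each
time avoiding the finitely many lengths already chosen; on each pair of vertices the resulting
sequence of metrics is eventually constant, and the limit is the required metric.
-/

section AdmissibleLength

variable {V : Type*}

/-- A length `t` for the pair `uv` is admissible if joining `u` to `v` by a shortcut of length `t`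
shortens no edge of `G`. By symmetry of `G` it suffices to consider crossings from `u` to `v`. -/
def IsAdmissibleLength (D : V → V → ℝ) (G : SimpleGraph V) (u v : V) (t : ℝ) : Prop :=
  ∀ ⦃a b⦄, G.Adj a b → D a b ≤ D a u + t + D v b

/-- A distance function is floppy over `G` if the distance between any two non-adjacent points
strictly exceeds some admissible length. This restates `ď < d̂` without suprema. -/
def IsFloppy (D : V → V → ℝ) (G : SimpleGraph V) : Prop :=
  ∀ ⦃u v⦄, Gᶜ.Adj u v → ∃ t < D u v, IsAdmissibleLength D G u v t

variable {D : V → V → ℝ} {G : SimpleGraph V} {u v x y : V} {s t : ℝ}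

lemma IsAdmissibleLength.mono (h : IsAdmissibleLength D G u v s) (hst : s ≤ t) :
    IsAdmissibleLength D G u v t := fun a b hab => by
  linarith [h hab]

lemma IsAdmissibleLength.symm (hD : ∀ a b, D a b = D b a) (h : IsAdmissibleLength D G u v t) :
    IsAdmissibleLength D G v u t := fun a b hab => by
  linarith [h hab.symm, hD a b, hD a v, hD u b]

lemma IsAdmissibleLength.sup_edge (h : IsAdmissibleLength D G u v t)
    (hxy : D x y ≤ D x u + t + D v y) (hyx : D y x ≤ D y u + t + D v x) :
    IsAdmissibleLength D (G ⊔ SimpleGraph.edge x y) u v t := by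
  intro a b hab
  rcases (SimpleGraph.sup_adj ..).1 hab with hab | hab
  · exact h hab
  · obtain ⟨⟨rfl, rfl⟩ | ⟨rfl, rfl⟩, -⟩ := (SimpleGraph.edge_adj ..).1 hab
    exacts [hxy, hyx]

end AdmissibleLength

section Shortcut

variable {V : Type*}

/-- The distance obtained by adding a shortcut of length `r` between `x` and `y`. -/
noncomputable def shortcutDist [PseudoMetricSpace V] (x y : V) (r : ℝ) (u v : V) : ℝ :=
  min (dist u v) (min (dist u x + r + dist y v) (dist u y + r + dist x v))

section PseudoMetricSpace

variable [PseudoMetricSpace V] {G : SimpleGraph V} {x y u v : V} {r s t : ℝ}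

lemma shortcutDist_le_dist (x y : V) (r : ℝ) (u v : V) : shortcutDist x y r u v ≤ dist u v :=
  min_le_left _ _

lemma shortcutDist_le_left (x y : V) (r : ℝ) (u v : V) :
    shortcutDist x y r u v ≤ dist u x + r + dist y v :=
  (min_le_right _ _).trans (min_le_left _ _)

lemma shortcutDist_le_right (x y : V) (r : ℝ) (u v : V) :
    shortcutDist x y r u v ≤ dist u y + r + dist x v :=
  (min_le_right _ _).trans (min_le_right _ _)

lemma shortcutDist_cases (x y : V) (r : ℝ) (u v : V) :
    shortcutDist x y r u v = dist u v ∨ shortcutDist x y r u v = dist u x + r + dist y v ∨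
      shortcutDist x y r u v = dist u y + r + dist x v := by
  rcases min_choice (dist u v) (min (dist u x + r + dist y v) (dist u y + r + dist x v)) with h | h
  · exact Or.inl h
  · exact Or.inr ((min_choice _ _).imp h.trans h.trans)

lemma shortcutDist_eq_dist_or_le (x y : V) (r : ℝ) (u v : V) :
    shortcutDist x y r u v = dist u v ∨
      shortcutDist x y r u x + r + shortcutDist x y r y v ≤ shortcutDist x y r u v ∨
      shortcutDist x y r u y + r + shortcutDist x y r x v ≤ shortcutDist x y r u v := by
  have hle := shortcutDist_le_dist x y r
  refine (shortcutDist_cases x y r u v).imp_right (Or.imp ?_ ?_) <;> intro h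
  · linarith [hle u x, hle y v]
  · linarith [hle u y, hle x v]

lemma shortcutDist_comm (x y : V) (r : ℝ) (u v : V) :
    shortcutDist x y r u v = shortcutDist x y r v u := by
  unfold shortcutDist
  rw [min_comm (dist u x + r + dist y v), dist_comm u v, dist_comm u x, dist_comm u y,
    dist_comm x v, dist_comm y v]
  congr 2 <;> ring

lemma shortcutDist_self (x y : V) (hr : 0 ≤ r) (u : V) : shortcutDist x y r u u = 0 := by
  unfold shortcutDist
  rw [dist_self, min_eq_left]
  positivity

lemma shortcutDist_triangle (x y : V) (hr : 0 ≤ r) (u v w : V) :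
    shortcutDist x y r u w ≤ shortcutDist x y r u v + shortcutDist x y r v w := by
  have hle := shortcutDist_le_dist x y r u w
  have hle_left := shortcutDist_le_left x y r u w
  have hle_right := shortcutDist_le_right x y r u w
  have huw := dist_triangle u v w
  rcases shortcutDist_cases x y r u v with huv | huv | huv <;>
    rcases shortcutDist_cases x y r v w with hvw | hvw | hvw <;> rw [huv, hvw]
  · linarith
  · linarith [dist_triangle u v x]
  · linarith [dist_triangle u v y]
  · linarith [dist_triangle y v w]
  · linarith [dist_nonneg (x := y) (y := v), dist_nonneg (x := v) (y := x)]
  · linarith [dist_triangle u x w, dist_nonneg (x := y) (y := v), dist_nonneg (x := v) (y := y)]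
  · linarith [dist_triangle x v w]
  · linarith [dist_triangle u y w, dist_nonneg (x := x) (y := v), dist_nonneg (x := v) (y := x)]
  · linarith [dist_nonneg (x := x) (y := v), dist_nonneg (x := v) (y := y)]

lemma shortcutDist_endpoints (hr : 0 ≤ r) (hxy : r ≤ dist x y) : shortcutDist x y r x y = r := by
  simp only [shortcutDist, dist_self, zero_add, add_zero]
  rw [min_eq_left (a := r) (by linarith), min_eq_right hxy]

lemma shortcutDist_pos (x y : V) (hr : 0 < r) (huv : 0 < dist u v) :
    0 < shortcutDist x y r u v :=
  lt_min huv (lt_min (by positivity) (by positivity))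

lemma shortcutDist_eq_dist_of_adj (h : IsAdmissibleLength dist G x y r) (huv : G.Adj u v) :
    shortcutDist x y r u v = dist u v :=
  min_eq_left (le_min (h huv) (h.symm dist_comm huv))

lemma isAdmissibleLength_shortcutDist (h : IsAdmissibleLength dist G x y t)
    (ht : 0 ≤ t) (htr : t ≤ r) : IsAdmissibleLength (shortcutDist x y r) G x y t := by
  intro a b hab
  rw [shortcutDist_eq_dist_of_adj (h.mono htr) hab]
  have hxy := h hab
  have hyx := h.symm dist_comm hab
  rcases shortcutDist_cases x y r a x with ha | ha | ha <;>
    rcases shortcutDist_cases x y r y b with hb | hb | hb <;> rw [ha, hb] <;>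
    linarith [dist_self x, dist_self y, dist_triangle a x b, dist_triangle a y b,
      dist_nonneg (x := x) (y := y), dist_comm x y]

lemma shortcutDist_add_add_eq_or_le (x y : V) (hr : 0 ≤ r) (a u v b : V) :
    let S := shortcutDist x y r
    S a u + S u v + S v b = dist a u + dist u v + dist v b ∨
      S a x + r + S y b ≤ S a u + S u v + S v b ∨ S a y + r + S x b ≤ S a u + S u v + S v b := by
  intro S
  have tri := shortcutDist_triangle x y hr
  rcases shortcutDist_eq_dist_or_le x y r a u with hau | hau | hau
  · rcases shortcutDist_eq_dist_or_le x y r u v with huv | huv | huv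
    · rcases shortcutDist_eq_dist_or_le x y r v b with hvb | hvb | hvb
      · exact .inl (by rw [← hau, ← huv, ← hvb])
      · exact .inr (.inl (by linarith [tri a u x, tri u v x]))
      · exact .inr (.inr (by linarith [tri a u y, tri u v y]))
    · exact .inr (.inl (by linarith [tri a u x, tri y v b]))
    · exact .inr (.inr (by linarith [tri a u y, tri x v b]))
  · exact .inr (.inl (by linarith [tri y u b, tri u v b]))
  · exact .inr (.inr (by linarith [tri x u b, tri u v b]))

/-- The path from `a` to `b` via `uv` either avoids `xy`, and has the old slack `dist u v - s`, or
crosses `xy`, and has slack `r - t`. -/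
lemma IsAdmissibleLength.exists_lt_shortcutDist (h : IsAdmissibleLength dist G x y t)
    (ht : 0 ≤ t) (htr : t < r) (hs : IsAdmissibleLength dist G u v s) (hsuv : s < dist u v) :
    ∃ s' < shortcutDist x y r u v, IsAdmissibleLength (shortcutDist x y r) G u v s' := by
  set S := shortcutDist x y r with hS
  refine ⟨S u v - min (dist u v - s) (r - t), sub_lt_self _ (lt_min (by linarith) (by linarith)),
    fun a b hab => ?_⟩
  have hab_le : S a b ≤ dist a b := shortcutDist_le_dist x y r a b
  have hxy := isAdmissibleLength_shortcutDist h ht htr.le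
  have hyx := hxy.symm (shortcutDist_comm x y r)
  have min_left := min_le_left (dist u v - s) (r - t)
  have min_right := min_le_right (dist u v - s) (r - t)
  rcases shortcutDist_add_add_eq_or_le x y (ht.trans htr.le) a u v b with hpath | hpath | hpath <;>
    rw [← hS] at hpath
  · linarith [hs hab]
  · linarith [hxy hab]
  · linarith [hyx hab]

end PseudoMetricSpace

section MetricSpace

variable [MetricSpace V] {G : SimpleGraph V} {x y u v : V} {r t : ℝ}

/-- The metric space structure given by `shortcutDist`. -/
@[reducible] noncomputable def shortcutMetricSpace (x y : V) (hr : 0 < r) : MetricSpace V where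
  dist := shortcutDist x y r
  dist_self := shortcutDist_self x y hr.le
  dist_comm := shortcutDist_comm x y r
  dist_triangle := shortcutDist_triangle x y hr.le
  eq_of_dist_eq_zero {u v} h := by
    by_contra huv
    exact (shortcutDist_pos x y hr (dist_pos.2 huv)).ne' h

lemma lt_shortcutDist_add_add (hr : 0 < r) (hrxy : r < dist x y) (huv : u ≠ v)
    (hne : ¬(x = u ∧ y = v)) :
    r < shortcutDist x y r x u + shortcutDist x y r u v + shortcutDist x y r v y := by
  have hpos : 0 < dist x u + dist v y := by
    rcases not_and_or.1 hne with h | h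
    · linarith [dist_pos.2 h, dist_nonneg (x := v) (y := y)]
    · linarith [dist_pos.2 (Ne.symm h), dist_nonneg (x := x) (y := u)]
  have huv' := shortcutDist_pos x y hr (dist_pos.2 huv)
  have nonneg (a b : V) : 0 ≤ shortcutDist x y r a b :=
    @dist_nonneg _ (shortcutMetricSpace x y hr).toPseudoMetricSpace a b
  rcases shortcutDist_eq_dist_or_le x y r x u with hxu | hxu | hxu
  · rcases shortcutDist_eq_dist_or_le x y r v y with hvy | hvy | hvy
    · rcases shortcutDist_cases x y r u v with h | h | h
      · linarith [dist_triangle4 x u v y]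
      · linarith [dist_nonneg (x := u) (y := x), dist_nonneg (x := y) (y := v)]
      · linarith [dist_nonneg (x := u) (y := y), dist_nonneg (x := x) (y := v)]
    · linarith [nonneg x u, nonneg v x, nonneg y y]
    · linarith [nonneg x u, nonneg v y, nonneg x y, shortcutDist_endpoints hr.le hrxy.le]
  · linarith [nonneg x x, nonneg y u, nonneg v y]
  · linarith [nonneg x y, nonneg x u, nonneg v y, shortcutDist_endpoints hr.le hrxy.le]

lemma IsFloppy.sup_edge_shortcutDist (hG : IsFloppy dist G) (h : IsAdmissibleLength dist G x y t)
    (ht : 0 ≤ t) (htr : t < r) (hrxy : r < dist x y) :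
    IsFloppy (shortcutDist x y r) (G ⊔ SimpleGraph.edge x y) := by
  have hr := ht.trans_lt htr
  intro u v huv
  obtain ⟨huG, huv_edge⟩ := not_or.1 ((SimpleGraph.compl_adj ..).1 huv).2
  obtain ⟨s, hs_lt, hs⟩ := hG ((SimpleGraph.compl_adj ..).2 ⟨huv.ne, huG⟩)
  obtain ⟨s', hs'_lt, hs'⟩ := h.exists_lt_shortcutDist ht htr hs hs_lt
  have hne : ¬(x = u ∧ y = v) := fun ⟨hxu, hyv⟩ =>
    huv_edge ((SimpleGraph.edge_adj ..).2 ⟨.inl ⟨hxu.symm, hyv.symm⟩, huv.ne⟩)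
  have hne' : ¬(x = v ∧ y = u) := fun ⟨hxv, hyu⟩ =>
    huv_edge ((SimpleGraph.edge_adj ..).2 ⟨.inr ⟨hyu.symm, hxv.symm⟩, huv.ne⟩)
  set S := shortcutDist x y r
  have comm : ∀ a b, S a b = S b a := shortcutDist_comm x y r
  have hSxy : S x y = r := shortcutDist_endpoints hr.le hrxy.le
  have hforward : r < S x u + S u v + S v y := lt_shortcutDist_add_add hr hrxy huv.ne hne
  have hbackward : r < S x v + S v u + S u y := lt_shortcutDist_add_add hr hrxy huv.ne.symm hne'
  rw [comm v u] at hbackward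
  obtain ⟨s'', hs'_le, hfwd_le, hbwd_le, hs''_lt⟩ : ∃ s'', s' ≤ s'' ∧
      r - S x u - S v y ≤ s'' ∧ r - S x v - S u y ≤ s'' ∧ s'' < S u v :=
    ⟨max s' (max (r - S x u - S v y) (r - S x v - S u y)), by simp, by simp, by simp,
      max_lt hs'_lt (max_lt (by linarith) (by linarith))⟩
  refine ⟨s'', hs''_lt, (hs'.mono hs'_le).sup_edge ?_ ?_⟩
  · linarith
  · linarith [comm x y, comm u y, comm x v]

end MetricSpace

end Shortcut

section Selector

variable {V : Type*}

lemma nonempty_inter_sdiff_finite {α : Type*} [TopologicalSpace α] [T1Space α]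
    [∀ a : α, (nhdsWithin a {a}ᶜ).NeBot] {U A S : Set α} (hU : IsOpen U) (hne : U.Nonempty)
    (hUA : U ⊆ closure A) (hS : S.Finite) : ((U ∩ A) \ S).Nonempty := by
  obtain ⟨a, haU, haS⟩ : (U \ S).Nonempty :=
    hne.elim fun a ha => ((infinite_of_mem_nhds a (hU.mem_nhds ha)).sdiff hS).nonempty
  obtain ⟨b, ⟨hbU, hbS⟩, hbA⟩ :=
    mem_closure_iff.1 (hUA haU) (U \ S) (hU.sdiff hS.isClosed) ⟨haU, haS⟩
  exact ⟨b, ⟨hbU, hbA⟩, hbS⟩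

lemma IsFloppy.exists_metricSpace_sup_edge {M : MetricSpace V} {G : SimpleGraph V}
    (hG : IsFloppy M.dist G) {x y : V} (hxy : Gᶜ.Adj x y) {A S : Set ℝ}
    (hA : Set.Ioi 0 ⊆ closure A) (hS : S.Finite) :
    ∃ N : MetricSpace V, IsFloppy N.dist (G ⊔ SimpleGraph.edge x y) ∧
      (∀ a b, G.Adj a b → N.dist a b = M.dist a b) ∧ N.dist x y ∈ A \ S := by
  obtain ⟨t, htxy, ht⟩ := hG hxy
  have htxy' : max 0 t < dist x y := max_lt (dist_pos.2 hxy.ne) htxy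
  obtain ⟨r, ⟨⟨htr, hrxy⟩, hrA⟩, hrS⟩ : ((Set.Ioo (max 0 t) (dist x y) ∩ A) \ S).Nonempty :=
    nonempty_inter_sdiff_finite isOpen_Ioo (Set.nonempty_Ioo.2 htxy')
      (fun s hs => hA ((le_max_left 0 t).trans_lt hs.1)) hS
  have hr : 0 < r := (le_max_left 0 t).trans_lt htr
  refine ⟨shortcutMetricSpace x y hr,
    hG.sup_edge_shortcutDist (ht.mono (le_max_right 0 t)) (le_max_left 0 t) htr hrxy,
    fun a b => shortcutDist_eq_dist_of_adj (ht.mono ((le_max_right 0 t).trans htr.le)), ?_⟩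
  change shortcutDist x y r x y ∈ A \ S
  rw [shortcutDist_endpoints hr.le hrxy.le]
  exact ⟨hrA, hrS⟩

/-- The distance function of a metric space on unordered pairs. -/
def pairDist (M : MetricSpace V) : Sym2 V → ℝ :=
  Sym2.lift ⟨M.dist, M.dist_comm⟩

/-- A finite stage of the construction of a metric that extends the lengths `M` of the edges of `G`
by distinct lengths from the sets `F e`: the lengths in `metric` are final on the edges of `graph`
and provisional elsewhere. -/
structure PartialSelector (M : MetricSpace V) (G : SimpleGraph V) (F : Sym2 V → Set ℝ) where
  graph : SimpleGraph V
  metric : MetricSpace V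
  floppy : IsFloppy metric.dist graph
  le_graph : G ≤ graph
  eqOn : Set.EqOn (pairDist metric) (pairDist M) G.edgeSet
  finite : (graph.edgeSet \ G.edgeSet).Finite
  mem : ∀ e ∈ graph.edgeSet \ G.edgeSet, pairDist metric e ∈ F e
  injOn : Set.InjOn (pairDist metric) (graph.edgeSet \ G.edgeSet)

namespace PartialSelector

variable {M : MetricSpace V} {G : SimpleGraph V} {F : Sym2 V → Set ℝ}

/-- A later stage keeps the lengths that are already final. -/
instance : Preorder (PartialSelector M G F) where
  le A B := A.graph ≤ B.graph ∧ Set.EqOn (pairDist B.metric) (pairDist A.metric) A.graph.edgeSet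
  le_refl A := ⟨le_rfl, Set.eqOn_refl _ _⟩
  le_trans A B C hAB hBC := ⟨hAB.1.trans hBC.1,
    (hBC.2.mono (SimpleGraph.edgeSet_subset_edgeSet.2 hAB.1)).trans hAB.2⟩

/-- The initial stage, at which only the edges of `G` have their final length. -/
def base (hG : IsFloppy M.dist G) : PartialSelector M G F where
  graph := G
  metric := M
  floppy := hG
  le_graph := le_rfl
  eqOn := Set.eqOn_refl _ _
  finite := by simp
  mem := by simp
  injOn := by simp

lemma exists_le_mem_edgeSet (A : PartialSelector M G F) {e : Sym2 V} (he : e ∈ Gᶜ.edgeSet)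
    (hF : Set.Ioi 0 ⊆ closure (F e)) : ∃ B, A ≤ B ∧ e ∈ B.graph.edgeSet := by
  by_cases heA : e ∈ A.graph.edgeSet
  · exact ⟨A, le_rfl, heA⟩
  induction e with | _ x y
  have hxy : A.graphᶜ.Adj x y := (SimpleGraph.compl_adj ..).2
    ⟨((SimpleGraph.compl_adj ..).1 he).1, heA⟩
  obtain ⟨N, hN, hNA, hmem, hnew⟩ := A.floppy.exists_metricSpace_sup_edge hxy hF
    (A.finite.image (pairDist A.metric))
  have hEq : Set.EqOn (pairDist N) (pairDist A.metric) A.graph.edgeSet :=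
    Sym2.ind fun a b => hNA a b
  have hedges : (A.graph ⊔ SimpleGraph.edge x y).edgeSet = insert s(x, y) A.graph.edgeSet := by
    rw [SimpleGraph.edgeSet_sup, SimpleGraph.edgeSet_edge_of_ne hxy.ne, Set.union_singleton]
  have hedges' : (A.graph ⊔ SimpleGraph.edge x y).edgeSet \ G.edgeSet =
      insert s(x, y) (A.graph.edgeSet \ G.edgeSet) := by
    rw [hedges, Set.insert_sdiff_of_notMem]
    exact ((SimpleGraph.compl_adj ..).1 he).2
  have hEq' := hEq.mono (Set.sdiff_subset (t := G.edgeSet))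
  refine ⟨⟨A.graph ⊔ SimpleGraph.edge x y, N, hN, A.le_graph.trans le_sup_left,
    (hEq.mono (SimpleGraph.edgeSet_subset_edgeSet.2 A.le_graph)).trans A.eqOn, ?_, ?_, ?_⟩,
    ⟨le_sup_left, hEq⟩, hedges ▸ Set.mem_insert _ _⟩ <;> rw [hedges']
  · exact A.finite.insert _
  · rw [Set.forall_mem_insert]
    exact ⟨hmem, fun e he => hEq' he ▸ A.mem e he⟩
  · rw [Set.injOn_insert fun h => heA h.1, hEq'.injOn_iff, hEq'.image_eq]
    exact ⟨A.injOn, hnew⟩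

end PartialSelector

/-- The limit of a family of metrics whose distances are eventually constant. -/
@[reducible] def limitMetricSpace {ι : Type*} {l : Filter ι} [l.NeBot] (M : ι → MetricSpace V)
    (D : V → V → ℝ) (h : ∀ a b, ∀ᶠ i in l, (M i).dist a b = D a b) : MetricSpace V where
  dist := D
  dist_self a := by
    obtain ⟨i, hi⟩ := (h a a).exists
    exact hi.symm.trans ((M i).dist_self a)
  dist_comm a b := by
    obtain ⟨i, hab, hba⟩ := ((h a b).and (h b a)).exists
    exact hab.symm.trans (((M i).dist_comm a b).trans hba)
  dist_triangle a b c := by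
    obtain ⟨i, hab, hbc, hac⟩ := ((h a b).and ((h b c).and (h a c))).exists
    rw [← hab, ← hbc, ← hac]
    exact (M i).dist_triangle a b c
  eq_of_dist_eq_zero {a b} hab := by
    obtain ⟨i, hi⟩ := (h a b).exists
    exact (M i).eq_of_dist_eq_zero (hi.trans hab)

lemma IsFloppy.exists_monotone_partialSelector {M : MetricSpace V} {G : SimpleGraph V}
    (hG : IsFloppy M.dist G) (hcount : Gᶜ.edgeSet.Countable) {F : Sym2 V → Set ℝ}
    (hF : ∀ e ∈ Gᶜ.edgeSet, Set.Ioi 0 ⊆ closure (F e)) :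
    ∃ A : ℕ → PartialSelector M G F, Monotone A ∧
      ∀ a b, a ≠ b → ∀ᶠ n in Filter.atTop, (A n).graph.Adj a b := by
  let := hcount.toEncodable
  let deciding (e : Gᶜ.edgeSet) : Order.Cofinal (PartialSelector M G F) :=
    ⟨{A | (e : Sym2 V) ∈ A.graph.edgeSet}, fun A =>
      let ⟨B, hAB, heB⟩ := A.exists_le_mem_edgeSet e.2 (hF e e.2)
      ⟨B, heB, hAB⟩⟩
  let A := Order.sequenceOfCofinals (PartialSelector.base hG) deciding
  have hA : Monotone A := Order.sequenceOfCofinals.monotone _ _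
  refine ⟨A, hA, fun a b hab => ?_⟩
  by_cases hG_ab : G.Adj a b
  · exact .of_forall fun n => (A n).le_graph hG_ab
  · let e : Gᶜ.edgeSet := ⟨s(a, b), (SimpleGraph.compl_adj ..).2 ⟨hab, hG_ab⟩⟩
    filter_upwards [Filter.eventually_ge_atTop (Encodable.encode e + 1)] with n hn
    exact (hA hn).1 (Order.sequenceOfCofinals.encode_mem (PartialSelector.base hG) deciding e)

theorem IsFloppy.exists_metricSpace_injOn {M : MetricSpace V} {G : SimpleGraph V}
    (hG : IsFloppy M.dist G) (hcount : Gᶜ.edgeSet.Countable) {F : Sym2 V → Set ℝ}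
    (hF : ∀ e ∈ Gᶜ.edgeSet, Set.Ioi 0 ⊆ closure (F e)) :
    ∃ N : MetricSpace V, Set.EqOn (pairDist N) (pairDist M) G.edgeSet ∧
      (∀ e ∈ Gᶜ.edgeSet, pairDist N e ∈ F e) ∧ Set.InjOn (pairDist N) Gᶜ.edgeSet := by
  obtain ⟨A, hA, hadj⟩ := hG.exists_monotone_partialSelector hcount hF
  have hconst (a b : V) : ∃ c, ∀ᶠ n in Filter.atTop, (A n).metric.dist a b = c := by
    rcases eq_or_ne a b with rfl | hab
    · exact ⟨0, .of_forall fun n => (A n).metric.dist_self a⟩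
    · obtain ⟨n, hn⟩ := (hadj a b hab).exists
      refine ⟨(A n).metric.dist a b, ?_⟩
      filter_upwards [Filter.eventually_ge_atTop n] with m hm
      exact (hA hm).2 (x := s(a, b)) hn
  choose D hD using hconst
  let N := limitMetricSpace (fun n => (A n).metric) D hD
  have hlim (e : Sym2 V) : ∀ᶠ n in Filter.atTop, pairDist (A n).metric e = pairDist N e :=
    e.ind hD
  have hnew (e) (he : e ∈ Gᶜ.edgeSet) :
      ∀ᶠ n in Filter.atTop, e ∈ (A n).graph.edgeSet \ G.edgeSet := by
    induction e with | _ a b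
    filter_upwards [hadj a b ((SimpleGraph.compl_adj ..).1 he).1] with n hn
    exact ⟨hn, ((SimpleGraph.compl_adj ..).1 he).2⟩
  refine ⟨N, fun e he => ?_, fun e he => ?_, fun e he e' he' h => ?_⟩
  · obtain ⟨n, hn⟩ := (hlim e).exists
    exact hn.symm.trans ((A n).eqOn he)
  · obtain ⟨n, hn, hen⟩ := ((hlim e).and (hnew e he)).exists
    exact hn ▸ (A n).mem e hen
  · obtain ⟨n, hn, hn', hen, hen'⟩ :=
      ((hlim e).and ((hlim e').and ((hnew e he).and (hnew e' he')))).exists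
    exact (A n).injOn hen hen' (hn.trans (h.trans hn'.symm))

end Selector

section ShortestPath

variable {E : X → X → Prop} {d : X → X → ℝ} {x y z : X} {s t : ℝ}

lemma zero_mem_walkSums (x : X) : 0 ∈ walkSums E d x x :=
  ⟨0, fun _ => x, rfl, rfl, fun _ hi => absurd hi (Nat.not_lt_zero _), by simp⟩

lemma cons_mem_walkSums (hxy : E x y) (hs : s ∈ walkSums E d y z) :
    d x y + s ∈ walkSums E d x z := by
  obtain ⟨n, c, rfl, rfl, hc, rfl⟩ := hs
  refine ⟨n + 1, fun i => i.casesOn x c, rfl, rfl, fun i hi => ?_, ?_⟩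
  · cases i with
    | zero => exact hxy
    | succ i => exact hc i (Nat.lt_of_succ_lt_succ hi)
  · exact ((Finset.sum_range_succ' _ n).trans (add_comm _ _)).symm

lemma walkSums_induction {motive : X → ℝ → Prop} (nil : motive z 0)
    (cons : ∀ x y s, E x y → s ∈ walkSums E d y z → motive y s → motive x (d x y + s))
    (hs : s ∈ walkSums E d x z) : motive x s := by
  obtain ⟨n, c, rfl, rfl, hc, rfl⟩ := hs
  induction n generalizing c with
  | zero => simpa using nil
  | succ n ih =>
    rw [Finset.sum_range_succ', add_comm]
    have hc' (i) (hi : i < n) : E (c (i + 1)) (c (i + 1 + 1)) := hc (i + 1) (by omega)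
    exact cons _ _ _ (hc 0 n.succ_pos) ⟨n, fun i => c (i + 1), rfl, rfl, hc', rfl⟩
      (ih (fun i => c (i + 1)) nil cons hc')

lemma add_mem_walkSums (hs : s ∈ walkSums E d x y) (ht : t ∈ walkSums E d y z) :
    s + t ∈ walkSums E d x z := by
  refine walkSums_induction (motive := fun x s => s + t ∈ walkSums E d x z) ?_ ?_ hs
  · rwa [zero_add]
  · intro x y s hxy _ ih
    rw [add_assoc]
    exact cons_mem_walkSums hxy ih

namespace IsGraphPseudometric

variable (hd : IsGraphPseudometric E d)
include hd

lemma nonneg_of_mem_walkSums (hs : s ∈ walkSums E d x y) : 0 ≤ s :=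
  walkSums_induction (motive := fun _ s => 0 ≤ s) le_rfl
    (fun _ _ _ hxy _ ih => add_nonneg (hd.nonneg hxy) ih) hs

lemma mem_walkSums_swap (hs : s ∈ walkSums E d x y) : s ∈ walkSums E d y x := by
  refine walkSums_induction (motive := fun x s => s ∈ walkSums E d y x) (zero_mem_walkSums y) ?_ hs
  intro x z s hxz _ ih
  have hzx : d x z ∈ walkSums E d z x := by
    rw [hd.wt_symm hxz, ← add_zero (d z x)]
    exact cons_mem_walkSums (hd.symm hxz) (zero_mem_walkSums x)
  rw [add_comm]
  exact add_mem_walkSums ih hzx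

lemma bddBelow_walkSums (x y : X) : BddBelow (walkSums E d x y) :=
  ⟨0, fun _ => hd.nonneg_of_mem_walkSums⟩

lemma walkSums_nonempty (hx : x ∈ Vtx E) (hy : y ∈ Vtx E) : (walkSums E d x y).Nonempty := by
  obtain ⟨n, c, h0, hn, hc⟩ := hd.connected x hx y hy
  exact ⟨_, n, c, h0, hn, hc, rfl⟩

lemma hatd_nonneg (x y : X) : 0 ≤ hatd E d x y :=
  Real.sInf_nonneg fun _ => hd.nonneg_of_mem_walkSums

lemma hatd_self (x : X) : hatd E d x x = 0 :=
  (csInf_le (hd.bddBelow_walkSums x x) (zero_mem_walkSums x)).antisymm (hd.hatd_nonneg x x)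

lemma hatd_comm (x y : X) : hatd E d x y = hatd E d y x :=
  congrArg sInf (Set.ext fun _ => ⟨hd.mem_walkSums_swap, hd.mem_walkSums_swap⟩)

lemma hatd_triangle (hx : x ∈ Vtx E) (hy : y ∈ Vtx E) (hz : z ∈ Vtx E) :
    hatd E d x z ≤ hatd E d x y + hatd E d y z := by
  have hwalk (s) (hs : s ∈ walkSums E d x y) : hatd E d x z - s ≤ hatd E d y z :=
    le_csInf (hd.walkSums_nonempty hy hz) fun t ht => by
      have : hatd E d x z ≤ s + t := csInf_le (hd.bddBelow_walkSums x z) (add_mem_walkSums hs ht)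
      linarith
  have hle : hatd E d x z - hatd E d y z ≤ hatd E d x y :=
    le_csInf (hd.walkSums_nonempty hx hy) fun s hs => by linarith [hwalk s hs]
  linarith

/-- The underlying graph on the vertex set. -/
def graph : SimpleGraph (Vtx E) where
  Adj a b := E a b
  symm := ⟨fun _ _ hab => hd.symm hab⟩
  loopless := ⟨fun a => hd.irrefl a⟩

/-- The shortest-path pseudometric as a structure on the vertex set. -/
@[reducible] noncomputable def pseudoMetricSpace : PseudoMetricSpace (Vtx E) where
  dist a b := hatd E d a b
  dist_self a := hd.hatd_self a
  dist_comm a b := hd.hatd_comm a b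
  dist_triangle a b c := hd.hatd_triangle a.2 b.2 c.2

lemma bddAbove_checkd (hx : x ∈ Vtx E) (hy : y ∈ Vtx E) :
    BddAbove ({0} ∪ {r | ∃ a b, E a b ∧ r = d a b - hatd E d a x - hatd E d y b}) := by
  refine ⟨hatd E d x y, ?_⟩
  rintro s (rfl | ⟨a, b, hab, rfl⟩)
  · exact hd.hatd_nonneg x y
  · have ha : a ∈ Vtx E := ⟨b, hab⟩
    have hb : b ∈ Vtx E := ⟨a, hd.symm hab⟩
    linarith [hd.edge_eq hab, hd.hatd_triangle ha hx hb, hd.hatd_triangle hx hy hb]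

lemma checkd_nonneg (hx : x ∈ Vtx E) (hy : y ∈ Vtx E) : 0 ≤ checkd E d x y :=
  le_csSup (hd.bddAbove_checkd hx hy) (Or.inl rfl)

lemma isAdmissibleLength_checkd (u v : Vtx E) :
    IsAdmissibleLength hd.pseudoMetricSpace.dist hd.graph u v (checkd E d u v) := by
  intro a b hab
  have hle : d a b - hatd E d a u - hatd E d v b ≤ checkd E d u v :=
    le_csSup (hd.bddAbove_checkd u.2 v.2) (Or.inr ⟨a, b, hab, rfl⟩)
  change hatd E d a b ≤ hatd E d a u + checkd E d u v + hatd E d v b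
  linarith [hd.edge_eq hab]

lemma mem_edgeSet_compl_graph {a b : Vtx E} (hab : (a : X) ≠ b) (hE : ¬E a b) :
    s(a, b) ∈ hd.graphᶜ.edgeSet :=
  (SimpleGraph.compl_adj ..).2 ⟨Subtype.coe_ne_coe.1 hab, hE⟩

lemma countable_edgeSet_compl_graph (hcount : (nonEdgePairs E).Countable) :
    hd.graphᶜ.edgeSet.Countable := by
  refine (hcount.preimage (Sym2.map.injective Subtype.val_injective)).mono
    (Sym2.ind fun a b h => ?_)
  obtain ⟨hne, hE⟩ := (SimpleGraph.compl_adj ..).1 h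
  exact ⟨a, b, rfl, Subtype.coe_ne_coe.2 hne, a.2, b.2, hE⟩

end IsGraphPseudometric

namespace FloppyMetric

variable (hp : FloppyMetric E d)
include hp

lemma isGraphPseudometric : IsGraphPseudometric E d :=
  hp.1.1

lemma hatd_pos (hx : x ∈ Vtx E) (hy : y ∈ Vtx E) (hxy : x ≠ y) : 0 < hatd E d x y := by
  by_cases hE : E x y
  · exact (hp.1.2 hE).trans_eq (hp.isGraphPseudometric.edge_eq hE)
  · exact (hp.isGraphPseudometric.checkd_nonneg hx hy).trans_lt (hp.2 x hx y hy hxy hE)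

/-- The shortest-path metric as a structure on the vertex set. -/
@[reducible] noncomputable def metricSpace : MetricSpace (Vtx E) where
  toPseudoMetricSpace := hp.isGraphPseudometric.pseudoMetricSpace
  eq_of_dist_eq_zero {a b} hab := by
    by_contra hne
    exact (hp.hatd_pos a.2 b.2 (Subtype.coe_ne_coe.2 hne)).ne' hab

lemma isFloppy : IsFloppy hp.metricSpace.dist hp.isGraphPseudometric.graph := fun u v huv =>
  ⟨checkd E d u v,
    hp.2 u u.2 v v.2 (Subtype.coe_ne_coe.2 huv.ne) ((SimpleGraph.compl_adj ..).1 huv).2,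
    hp.isGraphPseudometric.isAdmissibleLength_checkd u v⟩

end FloppyMetric

end ShortestPath

section Subtype

variable {V : Set X}

lemma isFullMetricOn_of_metricSpace (N : MetricSpace V) {D : X → X → ℝ}
    (hD : ∀ a b : V, a ≠ b → D a b = N.dist a b) : IsFullMetricOn V D := by
  have hD' (a b) (ha : a ∈ V) (hb : b ∈ V) (hab : a ≠ b) : D a b = N.dist ⟨a, ha⟩ ⟨b, hb⟩ :=
    hD ⟨a, ha⟩ ⟨b, hb⟩ (Subtype.coe_ne_coe.1 hab)
  refine ⟨fun a b ha hb hab => ?_, fun a b ha hb hab => ?_, fun a b c ha hb hc hab hbc hac => ?_⟩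
  · rw [hD' a b ha hb hab, hD' b a hb ha hab.symm]
    exact N.dist_comm _ _
  · rw [hD' a b ha hb hab]
    exact dist_pos.2 (Subtype.coe_ne_coe.1 hab)
  · rw [hD' a b ha hb hab, hD' b c hb hc hbc, hD' a c ha hc hac]
    exact N.dist_triangle _ _ _

/-- The extension by zero to all pairs in `X` of the distances between points of `V`. -/
noncomputable def extendDist (N : MetricSpace V) (a b : X) : ℝ :=
  Function.extend (Sym2.map Subtype.val) (pairDist N) 0 s(a, b)

lemma extendDist_coe (N : MetricSpace V) (a b : V) : extendDist N a b = N.dist a b :=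
  (Sym2.map.injective Subtype.val_injective).extend_apply (pairDist N) 0 s(a, b)

lemma extendDist_comm (N : MetricSpace V) (a b : X) : extendDist N a b = extendDist N b a := by
  rw [extendDist, Sym2.eq_swap, extendDist]

lemma sym2_eq_of_extendDist_eq {N : MetricSpace V} {S : Set (Sym2 V)}
    (hinj : Set.InjOn (pairDist N) S) {a b a' b' : X} (ha : a ∈ V) (hb : b ∈ V) (ha' : a' ∈ V)
    (hb' : b' ∈ V) (h : s(⟨a, ha⟩, ⟨b, hb⟩) ∈ S) (h' : s(⟨a', ha'⟩, ⟨b', hb'⟩) ∈ S)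
    (heq : extendDist N a b = extendDist N a' b') : s(a, b) = s(a', b') := by
  lift a to V using ha
  lift b to V using hb
  lift a' to V using ha'
  lift b' to V using hb'
  rw [extendDist_coe, extendDist_coe] at heq
  exact congrArg (Sym2.map Subtype.val) (hinj h h' heq)

/-- The sets `F a b` as a family indexed by unordered pairs; the intersection makes the value
independent of the order, and equals `F a b` whenever `F a b = F b a`. -/
def pairFamily (V : Set X) (F : X → X → Set ℝ) : Sym2 V → Set ℝ :=
  Sym2.lift ⟨fun a b => F a b ∩ F b a, fun _ _ => Set.inter_comm _ _⟩

lemma pairFamily_mk {F : X → X → Set ℝ} {a b : V} (h : F a b = F b a) :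
    pairFamily V F s(a, b) = F a b := by
  change F a b ∩ F b a = F a b
  rw [← h, Set.inter_self]

end Subtype

/-- If `p` is a floppy graph metric with `[V]² \ E` at most countable,
then for any family `(F_e)` of dense subsets of `(0, ∞)` indexed by the non-edges there
is an injective selector `r` such that `p ∪ r` is a full metric on `V`. -/
theorem exists_injective_selector_full_metric (E : X → X → Prop) (p : X → X → ℝ)
    (hp : FloppyMetric E p) (hcount : (nonEdgePairs E).Countable)
    (F : X → X → Set ℝ)
    (hFdense : ∀ a b, a ∈ Vtx E → b ∈ Vtx E → a ≠ b → ¬ E a b →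
      F a b = F b a ∧ F a b ⊆ Set.Ioi (0 : ℝ) ∧
      ∀ t ∈ Set.Ioi (0 : ℝ), ∀ ε : ℝ, 0 < ε → ∃ s ∈ F a b, |s - t| < ε) :
    ∃ r : X → X → ℝ,
      (∀ a b, a ∈ Vtx E → b ∈ Vtx E → a ≠ b → ¬ E a b →
        r a b = r b a ∧ r a b ∈ F a b) ∧
      (∀ a b a' b', a ∈ Vtx E → b ∈ Vtx E → a ≠ b → ¬ E a b →
        a' ∈ Vtx E → b' ∈ Vtx E → a' ≠ b' → ¬ E a' b' →
        ¬ ((a' = a ∧ b' = b) ∨ (a' = b ∧ b' = a)) → r a b ≠ r a' b') ∧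
      IsFullMetricOn (Vtx E) (fun a b => if E a b then p a b else r a b) := by
  have hd := hp.isGraphPseudometric
  have hdense : ∀ e ∈ hd.graphᶜ.edgeSet, Set.Ioi 0 ⊆ closure (pairFamily (Vtx E) F e) := by
    refine Sym2.ind fun a b hab t ht => Metric.mem_closure_iff.2 fun ε hε => ?_
    obtain ⟨hne, hE⟩ := (SimpleGraph.compl_adj ..).1 hab
    obtain ⟨hsymm, -, hF⟩ := hFdense a b a.2 b.2 (Subtype.coe_ne_coe.2 hne) hE
    rw [pairFamily_mk hsymm]
    simpa only [dist_comm t, Real.dist_eq] using hF t ht ε hε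
  obtain ⟨N, hext, hmem, hinj⟩ :=
    hp.isFloppy.exists_metricSpace_injOn (hd.countable_edgeSet_compl_graph hcount) hdense
  refine ⟨extendDist N, fun a b ha hb hab hE => ⟨extendDist_comm N a b, ?_⟩,
    fun a b a' b' ha hb hab hE ha' hb' hab' hE' hne heq => hne ?_,
    isFullMetricOn_of_metricSpace N fun a b _ => ?_⟩
  · lift a to Vtx E using ha
    lift b to Vtx E using hb
    rw [extendDist_coe, ← pairFamily_mk (hFdense a b a.2 b.2 hab hE).1]
    exact hmem _ (hd.mem_edgeSet_compl_graph hab hE)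
  · exact Sym2.eq_iff.1 (sym2_eq_of_extendDist_eq hinj ha' hb' ha hb
      (hd.mem_edgeSet_compl_graph hab' hE') (hd.mem_edgeSet_compl_graph hab hE) heq.symm)
  · split_ifs with hE
    · exact (hd.edge_eq hE).trans (hext (x := s(a, b)) hE).symm
    · exact extendDist_coe N a b

end GraphMetricPaper
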